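/- Let g_{k,s}(x) = e^{-(x−s)²/2 + i k x} for k, s ∈ ℝ, and let z = k − i s. Then for every n ≥ 0 the Hermite expansion coefficient of g_{k,s} satisfies c_n(k,s) = ∫_ℝ g_{k,s}(x) Ĥ_n(x) dx = π^{1/4} e^{-z²/4 − s²/2} (i z)^n / √(2^n n!). -/

import Mathlib

open MeasureTheory Real
noncomputable section
def physHermite : ℕ → ℝ → ℝ
  | 0 => fun _ => 1
  | 1 => fun x => 2 * x
  | n + 2 => fun x => 2 * x * physHermite (n + 1) x - 2 * (n + 1) * physHermite n x
def hermiteFun (n : ℕ) (x : ℝ) : ℝ :=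
  (Real.sqrt (Real.sqrt Real.pi))⁻¹ * (Real.sqrt (2 ^ n * Nat.factorial n))⁻¹ *
    Real.exp (-x ^ 2 / 2) * physHermite n x
/-- The Gaussian wave packet `g_{k,s}(x) = e^{-(x-s)²/2 + ikx}`. -/
def gks (k s : ℝ) (x : ℝ) : ℂ :=
  Complex.exp (-((x : ℂ) - (s : ℂ)) ^ 2 / 2 + Complex.I * (k : ℂ) * (x : ℂ))

/-!
Put `c = iz`. Up to normalization, the integrand is `E(x) H_n(x)` with
`E(x) = exp (-x² + c x - s²/2)`. Since `H_{n+1} = 2x H_n - H_n'`, the derivative of `E H_n` is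
`c E H_n - E H_{n+1}`; integrating it over `ℝ` shows that each increment of `n` multiplies the
integral by `c`. The case `n = 0` is the Gaussian integral `√π exp (c²/4 - s²/2)`.
-/

lemma abs_pow_le_factorial_mul_exp_add_exp_neg (x : ℝ) (m : ℕ) :
    |x| ^ m ≤ m.factorial * (rexp x + rexp (-x)) :=
  calc |x| ^ m ≤ m.factorial * rexp |x| :=
        (div_le_iff₀' (by positivity)).1 (pow_div_factorial_le_exp |x| (abs_nonneg x) m)
    _ ≤ m.factorial * (rexp x + rexp (-x)) := by gcongr; exact exp_abs_le x

lemma integrable_cexp_quadratic_mul_pow {b : ℂ} (hb : b.re < 0) (c d : ℂ) (m : ℕ) :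
    Integrable fun x : ℝ ↦ Complex.exp (b * x ^ 2 + c * x + d) * (x : ℂ) ^ m := by
  have hdom : Integrable fun x : ℝ ↦ m.factorial *
      (‖Complex.exp (b * x ^ 2 + (c + 1) * x + d)‖ +
        ‖Complex.exp (b * x ^ 2 + (c - 1) * x + d)‖) :=
    ((integrable_cexp_quadratic' hb (c + 1) d).norm.add
      (integrable_cexp_quadratic' hb (c - 1) d).norm).const_mul _
  refine hdom.mono' (by fun_prop) (.of_forall fun x ↦ ?_)
  have shift_add : ‖Complex.exp (b * x ^ 2 + (c + 1) * x + d)‖ =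
      ‖Complex.exp (b * x ^ 2 + c * x + d)‖ * rexp x := by
    rw [← Complex.norm_exp_ofReal, ← norm_mul, ← Complex.exp_add]; ring_nf
  have shift_sub : ‖Complex.exp (b * x ^ 2 + (c - 1) * x + d)‖ =
      ‖Complex.exp (b * x ^ 2 + c * x + d)‖ * rexp (-x) := by
    rw [← Complex.norm_exp_ofReal, ← norm_mul, ← Complex.exp_add]; push_cast; ring_nf
  calc ‖Complex.exp (b * x ^ 2 + c * x + d) * (x : ℂ) ^ m‖
      = ‖Complex.exp (b * x ^ 2 + c * x + d)‖ * |x| ^ m := by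
        rw [norm_mul, norm_pow, Complex.norm_real, norm_eq_abs]
    _ ≤ ‖Complex.exp (b * x ^ 2 + c * x + d)‖ * (m.factorial * (rexp x + rexp (-x))) := by
        gcongr; exact abs_pow_le_factorial_mul_exp_add_exp_neg x m
    _ = _ := by rw [shift_add, shift_sub]; ring

lemma integrable_cexp_quadratic_mul_polynomial {b : ℂ} (hb : b.re < 0) (c d : ℂ)
    (p : Polynomial ℂ) :
    Integrable fun x : ℝ ↦ Complex.exp (b * x ^ 2 + c * x + d) * p.eval (x : ℂ) := by
  induction p using Polynomial.induction_on' with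
  | add p q hp hq => simpa only [Polynomial.eval_add, mul_add] using hp.fun_add hq
  | monomial m a =>
    simpa only [Polynomial.eval_monomial, mul_left_comm] using
      (integrable_cexp_quadratic_mul_pow hb c d m).const_mul a

lemma hasDerivAt_cexp_quadratic (b c d : ℂ) (x : ℝ) :
    HasDerivAt (fun y : ℝ ↦ Complex.exp (b * y ^ 2 + c * y + d))
      (Complex.exp (b * x ^ 2 + c * x + d) * (2 * b * x + c)) x := by
  have hx : HasDerivAt (fun y : ℝ ↦ (y : ℂ)) 1 x := Complex.ofRealCLM.hasDerivAt
  refine (((hx.pow 2).const_mul b).add (hx.const_mul c) |>.add_const d).cexp.congr_deriv ?_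
  simp only [Pi.add_apply, Pi.pow_apply]
  ring

lemma integral_cexp_quadratic_mul_sub_deriv {b c d : ℂ} {f f' : ℝ → ℂ}
    (hf : ∀ x, HasDerivAt f (f' x) x)
    (hint : Integrable fun x : ℝ ↦ Complex.exp (b * x ^ 2 + c * x + d) * f x)
    (hint' : Integrable fun x : ℝ ↦
      Complex.exp (b * x ^ 2 + c * x + d) * (-2 * b * x * f x - f' x)) :
    ∫ x : ℝ, Complex.exp (b * x ^ 2 + c * x + d) * (-2 * b * x * f x - f' x) =
      c * ∫ x : ℝ, Complex.exp (b * x ^ 2 + c * x + d) * f x := by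
  have hderiv (x : ℝ) : HasDerivAt (fun y : ℝ ↦ Complex.exp (b * y ^ 2 + c * y + d) * f y)
      (c * (Complex.exp (b * x ^ 2 + c * x + d) * f x) -
        Complex.exp (b * x ^ 2 + c * x + d) * (-2 * b * x * f x - f' x)) x :=
    ((hasDerivAt_cexp_quadratic b c d x).mul (hf x)).congr_deriv (by ring)
  have hzero := integral_eq_zero_of_hasDerivAt_of_integrable hderiv
    ((hint.const_mul c).sub hint') hint
  rw [integral_sub (hint.const_mul c) hint', integral_const_mul, sub_eq_zero] at hzero
  exact hzero.symm

lemma hasDerivAt_physHermite : ∀ (n : ℕ) (x : ℝ),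
    HasDerivAt (physHermite n) (2 * x * physHermite n x - physHermite (n + 1) x) x
  | 0, x => (hasDerivAt_const x (1 : ℝ)).congr_deriv (by simp [physHermite])
  | 1, x => ((hasDerivAt_id x).const_mul (2 : ℝ)).congr_deriv (by simp [physHermite])
  | n + 2, x => by
    refine ((((hasDerivAt_id x).const_mul (2 : ℝ)).mul (hasDerivAt_physHermite (n + 1) x)).sub
      ((hasDerivAt_physHermite n x).const_mul (2 * ((n : ℝ) + 1)))).congr_deriv ?_
    simp only [physHermite, id_eq]
    push_cast
    ring

lemma exists_polynomial_eval_eq_physHermite : ∀ n : ℕ,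
    ∃ p : Polynomial ℝ, ∀ x, p.eval x = physHermite n x
  | 0 => ⟨1, fun x ↦ by simp [physHermite]⟩
  | 1 => ⟨2 * Polynomial.X, fun x ↦ by simp [physHermite]⟩
  | n + 2 => by
    obtain ⟨p, hp⟩ := exists_polynomial_eval_eq_physHermite n
    obtain ⟨q, hq⟩ := exists_polynomial_eval_eq_physHermite (n + 1)
    exact ⟨2 * Polynomial.X * q - 2 * ((n : Polynomial ℝ) + 1) * p,
      fun x ↦ by simp [physHermite, hp, hq]⟩

lemma integrable_cexp_quadratic_mul_physHermite {b : ℂ} (hb : b.re < 0) (c d : ℂ) (n : ℕ) :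
    Integrable fun x : ℝ ↦ Complex.exp (b * x ^ 2 + c * x + d) * (physHermite n x : ℂ) := by
  obtain ⟨p, hp⟩ := exists_polynomial_eval_eq_physHermite n
  refine (integrable_cexp_quadratic_mul_polynomial hb c d (p.map Complex.ofRealHom)).congr
    (.of_forall fun x ↦ ?_)
  simp only [← hp, ← Complex.ofRealHom_eq_coe, Polynomial.eval_map_apply]

lemma integral_cexp_neg_sq_add_mul_add_mul_physHermite_succ (c d : ℂ) (n : ℕ) :
    ∫ x : ℝ, Complex.exp (-x ^ 2 + c * x + d) * (physHermite (n + 1) x : ℂ) =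
      c * ∫ x : ℝ, Complex.exp (-x ^ 2 + c * x + d) * (physHermite n x : ℂ) := by
  have raising (x : ℝ) : (physHermite (n + 1) x : ℂ) = -2 * (-1) * x * (physHermite n x : ℂ) -
      ((2 * x * physHermite n x - physHermite (n + 1) x : ℝ) : ℂ) := by
    push_cast; ring
  have hint := integrable_cexp_quadratic_mul_physHermite (b := -1) (by simp) c d
  have hint' := hint (n + 1)
  simp only [raising] at hint'
  simpa only [← raising, neg_one_mul] using integral_cexp_quadratic_mul_sub_deriv
    (fun x ↦ (hasDerivAt_physHermite n x).ofReal_comp) (hint n) hint'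

lemma integral_cexp_neg_sq_add_mul_add (c d : ℂ) :
    ∫ x : ℝ, Complex.exp (-x ^ 2 + c * x + d) = √π * Complex.exp (c ^ 2 / 4 + d) := by
  have sqrt_pi : ((π : ℂ) / - -1) ^ (1 / 2 : ℂ) = √π := by
    rw [sqrt_eq_rpow, Complex.ofReal_cpow pi_pos.le]; simp
  have hgauss := integral_cexp_quadratic (b := -1) (by simp) c d
  simp only [sqrt_pi, neg_one_mul] at hgauss
  rw [hgauss]
  ring_nf

lemma integral_cexp_neg_sq_add_mul_add_mul_physHermite (c d : ℂ) (n : ℕ) :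
    ∫ x : ℝ, Complex.exp (-x ^ 2 + c * x + d) * (physHermite n x : ℂ) =
      √π * Complex.exp (c ^ 2 / 4 + d) * c ^ n := by
  induction n with
  | zero =>
    simp only [physHermite, Complex.ofReal_one, mul_one, pow_zero,
      integral_cexp_neg_sq_add_mul_add]
  | succ n ih => rw [integral_cexp_neg_sq_add_mul_add_mul_physHermite_succ, ih]; ring

lemma ofReal_hermiteFun (n : ℕ) (x : ℝ) :
    (hermiteFun n x : ℂ) = (√√π : ℂ)⁻¹ * (√(2 ^ n * n.factorial) : ℂ)⁻¹ *
      (Complex.exp (-x ^ 2 / 2) * physHermite n x) := by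
  simp only [hermiteFun]
  push_cast
  ring

lemma cexp_wavePacket_mul_cexp_neg_sq_half (k s x : ℂ) :
    Complex.exp (-(x - s) ^ 2 / 2 + Complex.I * k * x) * Complex.exp (-x ^ 2 / 2) =
      Complex.exp (-x ^ 2 + Complex.I * (k - Complex.I * s) * x + -(s ^ 2 / 2)) := by
  rw [← Complex.exp_add]
  congr 1
  linear_combination s * x * Complex.I_sq

theorem gks_hermite_coeff_general (k s : ℂ) (n : ℕ) :
    ∫ x : ℝ, Complex.exp (-(x - s) ^ 2 / 2 + Complex.I * k * x) * (hermiteFun n x : ℂ) =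
      √√π * Complex.exp (-(k - Complex.I * s) ^ 2 / 4 - s ^ 2 / 2) *
        (Complex.I * (k - Complex.I * s)) ^ n / √(2 ^ n * n.factorial) := by
  have integrand (x : ℝ) :
      Complex.exp (-(x - s) ^ 2 / 2 + Complex.I * k * x) * (hermiteFun n x : ℂ) =
        (√√π : ℂ)⁻¹ * (√(2 ^ n * n.factorial) : ℂ)⁻¹ *
          (Complex.exp (-x ^ 2 + Complex.I * (k - Complex.I * s) * x + -(s ^ 2 / 2)) *
            physHermite n x) := by
    rw [ofReal_hermiteFun, ← cexp_wavePacket_mul_cexp_neg_sq_half]; ring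
  have sqrt_pi : (√π : ℂ) = √√π * √√π := by
    rw [← Complex.ofReal_mul, mul_self_sqrt (sqrt_nonneg π)]
  have sqrt_sqrt_pi_ne_zero : (√√π : ℂ) ≠ 0 := by
    rw [Complex.ofReal_ne_zero]; positivity
  have I_mul_sq : (Complex.I * (k - Complex.I * s)) ^ 2 = -(k - Complex.I * s) ^ 2 := by
    rw [mul_pow, Complex.I_sq, neg_one_mul]
  simp_rw [integrand]
  rw [integral_const_mul, integral_cexp_neg_sq_add_mul_add_mul_physHermite, I_mul_sq, sqrt_pi,
    ← sub_eq_add_neg]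
  field_simp

/-- Hermite coefficients of the Gaussian wave packet:
`c_n(k,s) = π^{1/4} e^{-z²/4 - s²/2} (iz)^n / √(2^n n!)` with `z = k - is`. -/
theorem gks_hermite_coeff (k s : ℝ) (n : ℕ) :
    (∫ x : ℝ, gks k s x * (hermiteFun n x : ℂ))
      = (Real.sqrt (Real.sqrt Real.pi) : ℂ) *
          Complex.exp (-((k : ℂ) - Complex.I * (s : ℂ)) ^ 2 / 4 - (s : ℂ) ^ 2 / 2) *
          (Complex.I * ((k : ℂ) - Complex.I * (s : ℂ))) ^ n /
          (Real.sqrt (2 ^ n * Nat.factorial n) : ℂ) :=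
  gks_hermite_coeff_general k s n
end
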